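/- If the set of non-end folding points F \ E of a unimodal inverse limit X is nonempty, then it is dense in the set F of all folding points. -/

import Mathlib

open Set Filter Topology

/-- A unimodal map on `[0,1]` with critical point `c = 1/2`. -/
def IsUnimodal (T : ℝ → ℝ) : Prop :=
  ContinuousOn T (Set.Icc 0 1) ∧ Set.MapsTo T (Set.Icc 0 1) (Set.Icc 0 1) ∧
    StrictMonoOn T (Set.Icc 0 (1/2)) ∧ StrictAntiOn T (Set.Icc (1/2) 1)

/-- The inverse limit `lim←(K, T)`, as the space of backward orbits. -/
abbrev InvLim (T : ℝ → ℝ) (K : Set ℝ) :=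
  {x : ℕ → ℝ // (∀ n, x n ∈ K) ∧ ∀ n, T (x (n + 1)) = x n}

/-- A point `x` is an endpoint if for any two subcontinua `A`, `B` containing `x`,
either `A ⊆ B` or `B ⊆ A`. -/
def IsEndpointPt {Z : Type*} [TopologicalSpace Z] (x : Z) : Prop :=
  ∀ A B : Set Z, IsCompact A → IsConnected A → IsCompact B → IsConnected B →
    x ∈ A → x ∈ B → A ⊆ B ∨ B ⊆ A

/-- The ω-limit set of `c` under `T`. -/
def omegaSet (T : ℝ → ℝ) (c : ℝ) : Set ℝ :=
  {y | ∃ φ : ℕ → ℕ, StrictMono φ ∧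
    Filter.Tendsto (fun n => T^[φ n] c) Filter.atTop (nhds y)}

/-!
As `F \ E` is invariant under the shift `σ`, it is dense in `F` as soon as the coordinates `x 0`
of its points are dense in `ω(c)`. If `ω(c)` is minimal, the forward `σ`-orbit of a single point
of `F \ E` achieves this. Otherwise some `v ∈ ω(c)` has `ω(v) ≠ ω(c)`. Backward orbits that follow
the orbit of `c` during its long stays near `ω(v)` then give, with `x 0` near any prescribed point
of `ω(c)`, a folding point `x` whose backward orbit stays away from some point of `ω(c)`.

Such an `x` is not an endpoint. Values on either side of `x 0` lift to backward orbits that use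
the same branches of `T` as `x`, and the two lifts span arcs through `x` of which neither contains
the other. A lift close to `x` is obstructed only if `T^n` maps some interval `[T³ c, x n]`
monotonically onto a short interval at `x 0`. If this happens for infinitely many `n`, an
accumulation point `w` of these `x n` bounds an interval `[T³ c, w)` on which every iterate of `T`
is monotone. As the orbit of its left end accumulates on a point which the orbit of `w` avoids,
the images of this interval cannot be pairwise disjoint, so the orbit of `c` is attracted to a
periodic orbit; then every backward orbit in `ω(c)` accumulates on all of `ω(c)`.
-/

/-! ### Cluster points and `ω`-limit sets -/

section OmegaLimit

variable {X Y ι : Type*} [TopologicalSpace X] [TopologicalSpace Y] {f : X → Y} {s : Set X}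
  {l : Filter ι} {u : ι → X} {x : X}

lemma tendsto_comp_of_continuousOn [l.NeBot] (hf : ContinuousOn f s) (hs : IsClosed s)
    (hu : ∀ᶠ i in l, u i ∈ s) (h : Tendsto u l (𝓝 x)) : Tendsto (f ∘ u) l (𝓝 (f x)) :=
  (hf x (hs.mem_of_tendsto h hu)).tendsto.comp (tendsto_nhdsWithin_iff.2 ⟨h, hu⟩)

lemma mapClusterPt_comp_of_continuousOn (hf : ContinuousOn f s) (hs : IsClosed s)
    (hu : ∀ᶠ i in l, u i ∈ s) (h : MapClusterPt x l u) : MapClusterPt (f x) l (f ∘ u) := by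
  refine h.tendsto_comp' ((hf x (hs.mem_of_mapClusterPt h hu)).tendsto.mono_left ?_)
  exact inf_le_inf_left _ (le_principal_iff.2 hu)

lemma exists_pos_le_dist_of_not_mapClusterPt {Z : Type*} [PseudoMetricSpace Z] {u : ι → Z} {z : Z}
    (hz : ¬ MapClusterPt z l u) : ∃ r > 0, ∀ v, MapClusterPt v l u → r ≤ dist v z := by
  obtain ⟨r, hr, hball⟩ := Metric.isOpen_iff.1
    (isClosed_setOfPred_clusterPt (f := map u l)).isOpen_compl z hz
  exact ⟨r, hr, fun v hv => not_lt.1 fun hlt => hball hlt hv⟩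

variable {T : ℝ → ℝ} {K : Set ℝ} {p v w : ℝ}

lemma mem_omegaSet_iff_mapClusterPt : w ∈ omegaSet T p ↔ MapClusterPt w atTop (T^[·] p) := by
  constructor
  · rintro ⟨φ, hφ, hlim⟩
    exact .of_comp hφ.tendsto_atTop hlim.mapClusterPt
  · exact MapClusterPt.tendsto_subseq

lemma isClosed_omegaSet : IsClosed (omegaSet T p) := by
  have heq : omegaSet T p = {w | ClusterPt w (map (T^[·] p) atTop)} :=
    ext fun _ => mem_omegaSet_iff_mapClusterPt
  exact heq ▸ isClosed_setOfPred_clusterPt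

lemma omegaSet_subset (hK : IsClosed K) (hmaps : MapsTo T K K) (hp : p ∈ K) :
    omegaSet T p ⊆ K := fun _ hw =>
  hK.mem_of_mapClusterPt (mem_omegaSet_iff_mapClusterPt.1 hw)
    (Eventually.of_forall fun n => hmaps.iterate n hp)

lemma omegaSet_iterate (k : ℕ) : omegaSet T (T^[k] p) = omegaSet T p := by
  ext w
  simp only [mem_omegaSet_iff_mapClusterPt, ← Function.iterate_add_apply]
  exact (mapClusterPt_comp (φ := (· + k)) (u := (T^[·] p))).trans (by rw [map_add_atTop_eq_nat])

lemma mapsTo_omegaSet (hT : ContinuousOn T K) (hK : IsClosed K) (hmaps : MapsTo T K K)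
    (hp : p ∈ K) : MapsTo T (omegaSet T p) (omegaSet T p) := by
  intro w hw
  rw [mem_omegaSet_iff_mapClusterPt] at hw ⊢
  have hTw := mapClusterPt_comp_of_continuousOn hT hK
    (Eventually.of_forall fun n => hmaps.iterate n hp) hw
  refine .of_comp (tendsto_add_atTop_nat 1) (hTw.congrFun (Eventually.of_forall fun n => ?_))
  exact (Function.iterate_succ_apply' T n p).symm

lemma omegaSet_nonempty (hK : IsCompact K) (hmaps : MapsTo T K K) (hp : p ∈ K) :
    (omegaSet T p).Nonempty := by
  obtain ⟨w, -, hw⟩ := hK.exists_mapClusterPt (f := (atTop : Filter ℕ)) (u := (T^[·] p))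
    (tendsto_principal.2 (Eventually.of_forall fun n => hmaps.iterate n hp))
  exact ⟨w, mem_omegaSet_iff_mapClusterPt.2 hw⟩

lemma exists_iterate_visit_after_avoiding {U : Set ℝ} (hT : ContinuousOn T K) (hK : IsClosed K)
    (hmaps : MapsTo T K K) (hp : p ∈ K) (hU : U ∈ 𝓝 w) (hw : w ∈ omegaSet T p)
    (hv : v ∈ omegaSet T p) (havoid : ∀ k, T^[k] v ∉ closure U) (N : ℕ) :
    ∃ n ≥ N, T^[n] p ∈ U ∧ ∀ j ∈ Icc 1 N, T^[n - j] p ∉ U := by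
  classical
  have hnear : ∀ᶠ y in 𝓝[K] v, ∀ k ∈ Iic N, T^[k] y ∈ (closure U)ᶜ :=
    (eventually_all_finite (finite_Iic N)).2 fun k _ =>
      (hT.iterate hmaps k v (omegaSet_subset hK hmaps hp hv)).eventually_mem
        (isClosed_closure.isOpen_compl.mem_nhds (havoid k))
  obtain ⟨m, hmN, hm⟩ := frequently_atTop.1 ((mem_omegaSet_iff_mapClusterPt.1 hv).frequently
    (eventually_nhdsWithin_iff.1 hnear)) N
  have hvisit : ∃ n, m ≤ n ∧ T^[n] p ∈ U :=
    frequently_atTop.1 ((mem_omegaSet_iff_mapClusterPt.1 hw).frequently hU) m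
  set n := Nat.find hvisit
  obtain ⟨hmn, hnU⟩ : m ≤ n ∧ T^[n] p ∈ U := Nat.find_spec hvisit
  have hfirst : m + N < n := by
    by_contra! hle
    have havoid' := hm (hmaps.iterate m hp) (n - m) (mem_Iic.2 (by omega))
    rw [← Function.iterate_add_apply, Nat.sub_add_cancel hmn] at havoid'
    exact havoid' (subset_closure hnU)
  refine ⟨n, by omega, hnU, fun j hj hjU => ?_⟩
  exact Nat.find_min hvisit (m := n - j) (by have := hj.1; omega)
    ⟨by have := hj.2; omega, hjU⟩

end OmegaLimit

/-! ### The shift homeomorphism and folding points -/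

section Endpoints

variable {X Y : Type*} [TopologicalSpace X] [TopologicalSpace Y]

lemma IsEndpointPt.of_homeomorph (e : X ≃ₜ Y) {x : X} (hx : IsEndpointPt (e x)) :
    IsEndpointPt x := by
  intro A B hA hA' hB hB' hxA hxB
  have himage := hx (e '' A) (e '' B)
    (hA.image e.continuous) (hA'.image e e.continuous.continuousOn)
    (hB.image e.continuous) (hB'.image e e.continuous.continuousOn)
    (mem_image_of_mem e hxA) (mem_image_of_mem e hxB)
  rwa [image_subset_image_iff e.injective, image_subset_image_iff e.injective] at himage

lemma isEndpointPt_homeomorph_apply_iff (e : X ≃ₜ Y) {x : X} :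
    IsEndpointPt (e x) ↔ IsEndpointPt x :=
  ⟨.of_homeomorph e, fun hx => .of_homeomorph e.symm (by rwa [e.symm_apply_apply])⟩

end Endpoints

lemma exists_backward_orbit {X : Type*} {T : X → X} {S : ℕ → Set X}
    (hS : ∀ n, SurjOn T (S (n + 1)) (S n)) {t : X} (ht : t ∈ S 0) :
    ∃ u : ℕ → X, u 0 = t ∧ (∀ n, u n ∈ S n) ∧ ∀ n, T (u (n + 1)) = u n := by
  have hstep : ∀ n (v : S n), ∃ v' : S (n + 1), T v' = v := fun n v =>
    let ⟨v', hv', heq⟩ := hS n v.2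
    ⟨⟨v', hv'⟩, heq⟩
  choose g hg using hstep
  let u : (n : ℕ) → S n := fun n => Nat.rec ⟨t, ht⟩ g n
  exact ⟨fun n => (u n).1, rfl, fun n => (u n).2, fun n => hg n (u n)⟩

/-- The set `F` of folding points of `lim←(K, T)`: the backward orbits inside `ω(c)`. -/
def foldingPoints (T : ℝ → ℝ) (K : Set ℝ) (c : ℝ) : Set (InvLim T K) :=
  {x | ∀ n, x.1 n ∈ omegaSet T c}

namespace InvLim

variable {T : ℝ → ℝ} {K : Set ℝ} {c p z : ℝ}

lemma iterate_apply_add (x : InvLim T K) (k n : ℕ) : T^[k] (x.1 (n + k)) = x.1 n := by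
  induction k with
  | zero => rfl
  | succ k ih => rw [Function.iterate_succ_apply, ← add_assoc, x.2.2, ih]

lemma iterate_apply_of_le (x : InvLim T K) {k n : ℕ} (hkn : k ≤ n) :
    T^[k] (x.1 n) = x.1 (n - k) := by
  simpa only [Nat.sub_add_cancel hkn] using x.iterate_apply_add k (n - k)

lemma iterate_apply_self (x : InvLim T K) (n : ℕ) : T^[n] (x.1 n) = x.1 0 := by
  rw [x.iterate_apply_of_le le_rfl, Nat.sub_self]

lemma continuous_apply (n : ℕ) : Continuous fun x : InvLim T K => x.1 n :=
  (_root_.continuous_apply n).comp continuous_subtype_val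

/-- The shift homeomorphism `σ` of the inverse limit. Applying `T` to every coordinate of a
backward orbit prepends `T (x 0)` to it; the inverse of `σ` drops the coordinate `0`. -/
def shift (hT : ContinuousOn T K) (hmaps : MapsTo T K K) : InvLim T K ≃ₜ InvLim T K where
  toFun x := ⟨fun n => T (x.1 n), fun n => hmaps (x.2.1 n), fun n => congrArg T (x.2.2 n)⟩
  invFun x := ⟨fun n => x.1 (n + 1), fun n => x.2.1 (n + 1), fun n => x.2.2 (n + 1)⟩
  left_inv x := Subtype.ext (funext x.2.2)
  right_inv x := Subtype.ext (funext x.2.2)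
  continuous_toFun := .subtype_mk
    (continuous_pi fun n => hT.comp_continuous (continuous_apply n) fun x => x.2.1 n) _
  continuous_invFun := .subtype_mk (continuous_pi fun n => continuous_apply (n + 1)) _

variable (hT : ContinuousOn T K) (hmaps : MapsTo T K K)

lemma shift_iterate_apply (x : InvLim T K) (k n : ℕ) :
    ((shift hT hmaps)^[k] x).1 n = T^[k] (x.1 n) := by
  induction k generalizing x with
  | zero => rfl
  | succ _ ih => exact ih (shift hT hmaps x)

lemma shift_symm_iterate_apply (x : InvLim T K) (k n : ℕ) :
    ((shift hT hmaps).symm^[k] x).1 n = x.1 (n + k) := by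
  induction k generalizing x with
  | zero => rfl
  | succ k ih => exact (ih _).trans (congrArg x.1 (by omega))

lemma isEndpointPt_shift_symm_iterate_iff {x : InvLim T K} (k : ℕ) :
    IsEndpointPt ((shift hT hmaps).symm^[k] x) ↔ IsEndpointPt x := by
  induction k with
  | zero => rfl
  | succ k ih => rw [Function.iterate_succ_apply', isEndpointPt_homeomorph_apply_iff, ih]

lemma mapsTo_shift_foldingPoints (hK : IsClosed K) (hc : c ∈ K) :
    MapsTo (shift hT hmaps) (foldingPoints T K c) (foldingPoints T K c) :=
  fun _ hx n => mapsTo_omegaSet hT hK hmaps hc (hx n)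

variable {hT hmaps}

lemma exists_coord_nhds {x : InvLim T K} (hT : ContinuousOn T K) (hmaps : MapsTo T K K)
    {W : Set (InvLim T K)} (hW : W ∈ 𝓝 x) :
    ∃ n, ∃ V ∈ 𝓝 (x.1 n), ∀ y : InvLim T K, y.1 n ∈ V → y ∈ W := by
  obtain ⟨W', hW', hsub⟩ := mem_nhds_subtype _ _ _ |>.1 hW
  obtain ⟨I, hI, t, ht, htW'⟩ := mem_pi.1 (nhds_pi (a := x.1) ▸ hW')
  obtain ⟨M, hM⟩ := hI.bddAbove
  have hnear : ∀ᶠ v in 𝓝[K] x.1 M, ∀ i ∈ I, T^[M - i] v ∈ t i := by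
    refine (eventually_all_finite hI).2 fun i hi => ?_
    refine (hT.iterate hmaps (M - i) _ (x.2.1 M)).eventually_mem ?_
    rw [x.iterate_apply_of_le (Nat.sub_le M i), Nat.sub_sub_self (hM hi)]
    exact ht i
  refine ⟨M, _, eventually_nhdsWithin_iff.1 hnear, fun y hy => hsub (htW' fun i hi => ?_)⟩
  simpa only [y.iterate_apply_of_le (Nat.sub_le M i), Nat.sub_sub_self (hM hi)]
    using hy (y.2.1 M) i hi

lemma mem_closure_of_mapsTo_shift {D : Set (InvLim T K)}
    (hD : MapsTo (shift hT hmaps) D D) {x : InvLim T K}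
    (hx : ∀ n, x.1 n ∈ closure ((fun y : InvLim T K => y.1 0) '' D)) : x ∈ closure D := by
  refine mem_closure_iff_nhds.2 fun W hW => ?_
  obtain ⟨n, V, hV, hVW⟩ := exists_coord_nhds hT hmaps hW
  obtain ⟨_, hyV, y, hyD, rfl⟩ := mem_closure_iff_nhds.1 (hx n) V hV
  refine ⟨(shift hT hmaps)^[n] y, hVW _ ?_, hD.iterate n hyD⟩
  rwa [shift_iterate_apply, y.iterate_apply_self]

lemma compactSpace (hT : ContinuousOn T K) (hK : IsCompact K) : CompactSpace (InvLim T K) := by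
  refine isCompact_iff_compactSpace.1
    ((isCompact_univ_pi fun _ : ℕ => hK).of_isClosed_subset ?_ fun x hx n _ => hx.1 n)
  refine IsSeqClosed.isClosed fun u x hu hlim => ?_
  have hcoord := tendsto_pi_nhds.1 hlim
  refine ⟨fun n => hK.isClosed.mem_of_tendsto (hcoord n) (Eventually.of_forall fun i => (hu i).1 n),
    fun n => tendsto_nhds_unique (tendsto_comp_of_continuousOn hT hK.isClosed
      (Eventually.of_forall fun i => (hu i).1 (n + 1)) (hcoord (n + 1))) ?_⟩
  exact (hcoord n).congr fun i => ((hu i).2 n).symm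

lemma isCompact_setOf_forall_mem {J : ℕ → Set ℝ} (hT : ContinuousOn T K) (hK : IsCompact K)
    (hJ : ∀ n, IsClosed (J n)) : IsCompact {y : InvLim T K | ∀ n, y.1 n ∈ J n} := by
  have := compactSpace hT hK
  refine IsClosed.isCompact ?_
  rw [ofPred_forall]
  exact isClosed_iInter fun n => (hJ n).preimage (continuous_apply n)

lemma isPreconnected_setOf_forall_mem {J : ℕ → Set ℝ} (hT : ContinuousOn T K) (hK : IsCompact K)
    (hJ : ∀ n, IsClosed (J n)) (hJK : ∀ n, J n ⊆ K) (hbij : ∀ n, BijOn T (J (n + 1)) (J n))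
    (hJ0 : IsPreconnected (J 0)) : IsPreconnected {y : InvLim T K | ∀ n, y.1 n ∈ J n} := by
  set A := {y : InvLim T K | ∀ n, y.1 n ∈ J n}
  have : CompactSpace A := isCompact_iff_compactSpace.1 (isCompact_setOf_forall_mem hT hK hJ)
  let π₀ : A → ℝ := fun y => y.1.1 0
  have hcont : Continuous π₀ := (continuous_apply 0).comp continuous_subtype_val
  have hinj : Function.Injective π₀ := by
    intro y y' hyy'
    refine Subtype.ext (Subtype.ext (funext fun n => ?_))
    induction n with
    | zero => exact hyy'
    | succ n ih =>
      exact (hbij n).injOn (y.2 (n + 1)) (y'.2 (n + 1)) (by rw [y.1.2.2, y'.1.2.2, ih])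
  have hrange : J 0 ⊆ range π₀ := by
    intro t ht
    obtain ⟨u, rfl, huJ, huT⟩ := exists_backward_orbit (fun n => (hbij n).surjOn) ht
    exact ⟨⟨⟨u, fun n => hJK n (huJ n), huT⟩, huJ⟩, rfl⟩
  have huniv : π₀ ⁻¹' J 0 = univ := eq_univ_of_forall fun y => y.2 0
  have hpre : IsPreconnected (univ : Set A) :=
    huniv ▸ hJ0.preimage_of_isClosedMap hinj hcont.isClosedMap hrange
  simpa only [image_univ, Subtype.range_coe] using
    hpre.image Subtype.val continuous_subtype_val.continuousOn

lemma mapClusterPt_apply {x : InvLim T K} (hT : ContinuousOn T K) (hK : IsClosed K)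
    (hz : MapClusterPt z atTop x.1) : MapClusterPt (T z) atTop x.1 := by
  have hTz := mapClusterPt_comp_of_continuousOn hT hK (Eventually.of_forall x.2.1) hz
  refine .of_comp (tendsto_sub_atTop_nat 1) (hTz.congrFun ?_)
  filter_upwards [eventually_ge_atTop 1] with n hn
  exact x.iterate_apply_of_le hn

lemma mapClusterPt_iterate_apply {x : InvLim T K} (hT : ContinuousOn T K) (hK : IsClosed K)
    (hz : MapClusterPt z atTop x.1) (n : ℕ) : MapClusterPt (T^[n] z) atTop x.1 := by
  induction n with
  | zero => exact hz
  | succ n ih => exact Function.iterate_succ_apply' T n z ▸ mapClusterPt_apply hT hK ih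

lemma exists_tendsto_iterate_sub (hT : ContinuousOn T K) (hK : IsCompact K)
    (hmaps : MapsTo T K K) (hp : p ∈ K) {U : Ultrafilter ℕ} (hU : ↑U ≤ (atTop : Filter ℕ)) :
    ∃ x ∈ foldingPoints T K p, ∀ j : ℕ, Tendsto (fun n => T^[n - j] p) U (𝓝 (x.1 j)) := by
  have hmem : ∀ n, T^[n] p ∈ K := fun n => hmaps.iterate n hp
  have hlim : ∀ j : ℕ, ∃ w ∈ K, Tendsto (fun n => T^[n - j] p) U (𝓝 w) := fun j =>
    hK.ultrafilter_le_nhds (U.map fun n => T^[n - j] p)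
      (tendsto_principal.2 (Eventually.of_forall fun n => hmem (n - j)))
  choose x hxK hx using hlim
  refine ⟨⟨x, hxK, fun j => ?_⟩, fun j => ?_, hx⟩
  · refine tendsto_nhds_unique (tendsto_comp_of_continuousOn hT hK.isClosed
      (Eventually.of_forall fun n => hmem (n - (j + 1))) (hx (j + 1))) ((hx j).congr' ?_)
    filter_upwards [hU (eventually_ge_atTop (j + 1))] with n hn
    rw [Function.comp_apply, ← Function.iterate_succ_apply' T]
    congr 2
    omega
  · exact mem_omegaSet_iff_mapClusterPt.2
      (.of_comp ((tendsto_sub_atTop_nat j).mono_left hU) (hx j).mapClusterPt)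

lemma exists_foldingPoint_of_mem_omegaSet (hT : ContinuousOn T K) (hK : IsCompact K)
    (hmaps : MapsTo T K K) (hp : p ∈ K) (hz : z ∈ omegaSet T p) :
    ∃ x ∈ foldingPoints T K p, x.1 0 = z := by
  obtain ⟨U, hU, hlim⟩ := mapClusterPt_iff_ultrafilter.1 (mem_omegaSet_iff_mapClusterPt.1 hz)
  obtain ⟨x, hxF, hx⟩ := exists_tendsto_iterate_sub hT hK hmaps hp hU
  exact ⟨x, hxF, tendsto_nhds_unique (hx 0) hlim⟩

lemma exists_foldingPoint_mem_of_avoiding {v w : ℝ} {U : Set ℝ} (hT : ContinuousOn T K)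
    (hK : IsCompact K) (hmaps : MapsTo T K K) (hp : p ∈ K) (hU : U ∈ 𝓝 w)
    (hw : w ∈ omegaSet T p) (hv : v ∈ omegaSet T p) (havoid : ∀ k, T^[k] v ∉ U) :
    ∃ x ∈ foldingPoints T K p, x.1 0 ∈ U ∧ ¬ MapClusterPt w atTop x.1 := by
  obtain ⟨C, ⟨hC, hCclosed⟩, hCU⟩ := (closed_nhds_basis w).mem_iff.1 hU
  obtain ⟨V, hVC, hVopen, hwV⟩ := mem_nhds_iff.1 hC
  have hclosure : closure V ⊆ U := (closure_minimal hVC hCclosed).trans hCU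
  choose s hs hsV hsavoid using exists_iterate_visit_after_avoiding hT hK.isClosed hmaps hp
    (hVopen.mem_nhds hwV) hw hv fun k hk => havoid k (hclosure hk)
  have hs_tendsto : Tendsto s atTop atTop := tendsto_atTop_mono hs tendsto_id
  have hle : (hyperfilter ℕ : Filter ℕ) ≤ atTop := Nat.hyperfilter_le_atTop
  obtain ⟨x, hxF, hx⟩ := exists_tendsto_iterate_sub hT hK hmaps hp
    (U := (hyperfilter ℕ).map s) (hs_tendsto.mono_left hle)
  have hxV : ∀ j ≥ 1, x.1 j ∈ Vᶜ := fun j hj =>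
    hVopen.isClosed_compl.mem_of_tendsto (hx j) <| eventually_map.2 <|
      ((eventually_ge_atTop j).filter_mono hle).mono fun i hi => hsavoid i j ⟨hj, hi⟩
  refine ⟨x, hxF, hclosure (mem_closure_of_tendsto (hx 0)
    (eventually_map.2 (Eventually.of_forall hsV))), fun hcluster => ?_⟩
  exact hVopen.isClosed_compl.mem_of_mapClusterPt hcluster
    ((eventually_ge_atTop 1).mono hxV) hwV

lemma exists_foldingPoint_mem_not_mapClusterPt {v w : ℝ} {U : Set ℝ} (hT : ContinuousOn T K)
    (hK : IsCompact K) (hmaps : MapsTo T K K) (hp : p ∈ K) (hv : v ∈ omegaSet T p)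
    (hz : z ∈ omegaSet T p) (hzv : z ∉ omegaSet T v) (hw : w ∈ omegaSet T p) (hU : U ∈ 𝓝 w) :
    ∃ x ∈ foldingPoints T K p, x.1 0 ∈ U ∧
      ∃ z' ∈ omegaSet T p, ¬ MapClusterPt z' atTop x.1 := by
  have hinv := mapsTo_omegaSet hT hK.isClosed hmaps hp
  have hvK : v ∈ K := omegaSet_subset hK.isClosed hmaps hp hv
  have hsub : omegaSet T v ⊆ omegaSet T p := omegaSet_subset isClosed_omegaSet hinv hv
  by_cases hmeet : (omegaSet T v ∩ U).Nonempty
  · obtain ⟨t, ht, htU⟩ := hmeet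
    obtain ⟨x, hxF, rfl⟩ := exists_foldingPoint_of_mem_omegaSet hT hK hmaps hvK ht
    exact ⟨x, fun n => hsub (hxF n), htU, z, hz, fun hcluster =>
      hzv (isClosed_omegaSet.mem_of_mapClusterPt hcluster (Eventually.of_forall hxF))⟩
  · obtain ⟨t, ht⟩ := omegaSet_nonempty hK hmaps hvK
    have havoid : ∀ k, T^[k] t ∉ U := fun k hk =>
      hmeet ⟨_, (mapsTo_omegaSet hT hK.isClosed hmaps hvK).iterate k ht, hk⟩
    obtain ⟨x, hxF, hxU, hxw⟩ :=
      exists_foldingPoint_mem_of_avoiding hT hK hmaps hp hU hw (hsub ht) havoid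
    exact ⟨x, hxF, hxU, w, hw, hxw⟩

end InvLim

section AsymptoticPeriodicity

variable {T : ℝ → ℝ} {K : Set ℝ} {c z : ℝ}

/-- Some arithmetic progression of iterates of `c` converges, that is, the orbit of `c` is attracted
to a periodic orbit. This degenerate case is split off from the main argument. -/
def AsymptoticallyPeriodic (T : ℝ → ℝ) (c : ℝ) : Prop :=
  ∃ q > 0, ∃ i p, Tendsto (fun m => T^[q * m + i] c) atTop (𝓝 p)

lemma AsymptoticallyPeriodic.of_iterate_eq {m n : ℕ} (hmn : m < n)
    (heq : T^[m] c = T^[n] c) : AsymptoticallyPeriodic T c := by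
  refine ⟨n - m, Nat.sub_pos_of_lt hmn, m, T^[m] c, tendsto_const_nhds.congr fun k => ?_⟩
  have hperiodic : Function.IsPeriodicPt T (n - m) (T^[m] c) := by
    rw [Function.IsPeriodicPt, Function.IsFixedPt, ← Function.iterate_add_apply,
      Nat.sub_add_cancel hmn.le, heq]
  rw [Function.iterate_add_apply]
  exact (hperiodic.mul_const k).eq.symm

lemma injective_iterate_of_not_asymptoticallyPeriodic (h : ¬ AsymptoticallyPeriodic T c) :
    Function.Injective (T^[·] c) :=
  Function.Injective.of_eq_imp_le fun {m n} heq => by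
    by_contra! hlt
    exact h (.of_iterate_eq hlt heq.symm)

lemma AsymptoticallyPeriodic.exists_omegaSet_subset_orbit (h : AsymptoticallyPeriodic T c)
    (hT : ContinuousOn T K) (hK : IsClosed K) (hmaps : MapsTo T K K) (hc : c ∈ K) :
    ∃ q > 0, ∃ p, T^[q] p = p ∧ ∀ y ∈ omegaSet T c, ∃ t, y = T^[t] p := by
  obtain ⟨q, hq, i, p, hlim⟩ := h
  have hmem : ∀ n, T^[n] c ∈ K := fun n => hmaps.iterate n hc
  have hiter : ∀ t, Tendsto (fun m => T^[t] (T^[q * m + i] c)) atTop (𝓝 (T^[t] p)) := fun t =>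
    tendsto_comp_of_continuousOn (hT.iterate hmaps t) hK
      (Eventually.of_forall fun m => hmem (q * m + i)) hlim
  refine ⟨q, hq, p, ?_, fun y hy => ?_⟩
  · refine tendsto_nhds_unique ((hiter q).congr fun m => ?_) (hlim.comp (tendsto_add_atTop_nat 1))
    rw [Function.comp_apply, ← Function.iterate_add_apply, mul_add_one, add_left_comm, add_assoc]
  · obtain ⟨U, hU, hUy⟩ := mapClusterPt_iff_ultrafilter.1 (mem_omegaSet_iff_mapClusterPt.1 hy)
    have hresidue : ∀ᶠ n in (U : Filter ℕ), ∃ t ∈ Iio q, (n - i) % q = t :=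
      Eventually.of_forall fun n => ⟨_, Nat.mod_lt _ hq, rfl⟩
    obtain ⟨t, -, ht⟩ := (Ultrafilter.eventually_exists_mem_iff (finite_Iio q)).1 hresidue
    have hquot : Tendsto (fun n => (n - i) / q) U atTop :=
      ((Nat.tendsto_div_const_atTop hq.ne').comp (tendsto_sub_atTop_nat i)).mono_left hU
    refine ⟨t, tendsto_nhds_unique hUy (((hiter t).comp hquot).congr' ?_)⟩
    filter_upwards [ht, (eventually_ge_atTop i).filter_mono hU] with n hn hin
    rw [Function.comp_apply, ← Function.iterate_add_apply, ← hn, ← add_assoc, Nat.mod_add_div,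
      Nat.sub_add_cancel hin]

lemma AsymptoticallyPeriodic.mapClusterPt (h : AsymptoticallyPeriodic T c)
    (hT : ContinuousOn T K) (hK : IsClosed K) (hmaps : MapsTo T K K) (hc : c ∈ K)
    {x : InvLim T K} (hx : x ∈ foldingPoints T K c) (hz : z ∈ omegaSet T c) :
    MapClusterPt z atTop x.1 := by
  obtain ⟨q, hq, p, hp, horbit⟩ := h.exists_omegaSet_subset_orbit hT hK hmaps hc
  have hfixed : ∀ y ∈ omegaSet T c, ∀ k, T^[q * k] y = y := by
    intro y hy k
    obtain ⟨t, rfl⟩ := horbit y hy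
    exact ((Function.IsPeriodicPt.apply_iterate hp t).mul_const k).eq
  obtain ⟨k, hk⟩ : ∃ k, T^[k] (x.1 0) = z := by
    obtain ⟨s, hs⟩ := horbit _ (hx 0)
    obtain ⟨t, rfl⟩ := horbit z hz
    refine ⟨t + (q * s - s), ?_⟩
    rw [hs, Function.iterate_add_apply, ← Function.iterate_add_apply T (q * s - s),
      Nat.sub_add_cancel (Nat.le_mul_of_pos_left s hq),
      (Function.IsPeriodicPt.mul_const hp s).eq]
  refine mapClusterPt_iff_frequently.2 fun V hV => frequently_atTop.2 fun N => ?_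
  have hle : N + k ≤ q * (N + k) := Nat.le_mul_of_pos_left _ hq
  refine ⟨q * (N + k) - k, by omega, ?_⟩
  have hreturn : x.1 (q * (N + k)) = x.1 0 := by
    rw [← hfixed _ (hx _) (N + k), x.iterate_apply_self]
  rw [← x.iterate_apply_of_le (by omega : k ≤ q * (N + k)), hreturn, hk]
  exact mem_of_mem_nhds hV

end AsymptoticPeriodicity

/-! ### Monotone branches of unimodal maps -/

section OneSided

variable {f : ℝ → ℝ} {c e w : ℝ} {R S : Set ℝ}

/-- The set `S` does not straddle `c`. For a unimodal map with turning point `c`, these are the sets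
on which a single branch of the map suffices. -/
def IsOneSided (c : ℝ) (S : Set ℝ) : Prop :=
  S ⊆ Iic c ∨ S ⊆ Ici c

lemma IsOneSided.mono (h : IsOneSided c S) (hRS : R ⊆ S) : IsOneSided c R :=
  h.imp hRS.trans hRS.trans

lemma isOneSided_of_notMem (hS : IsPreconnected S) (hc : c ∉ S) : IsOneSided c S := by
  rw [IsOneSided, or_iff_not_imp_left, not_subset]
  rintro ⟨u, hu, hcu⟩ v hv
  by_contra hvc
  exact hc (hS.ordConnected.out hv hu ⟨(not_le.1 hvc).le, (not_le.1 hcu).le⟩)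

lemma isOneSided_image_Ico (h : ∀ v ∈ Ico e w, IsOneSided c (f '' Icc e v)) :
    IsOneSided c (f '' Ico e w) := by
  rw [IsOneSided, or_iff_not_imp_left, not_subset, image_subset_iff]
  rintro ⟨_, ⟨u, hu, rfl⟩, hcu⟩ v hv
  refine (h (max u v) ⟨le_max_of_le_left hu.1, max_lt hu.2 hv.2⟩).elim (fun hle => ?_) fun hge => ?_
  · exact absurd (hle (mem_image_of_mem f ⟨hu.1, le_max_left u v⟩)) hcu
  · exact hge (mem_image_of_mem f ⟨hv.1, le_max_right u v⟩)

lemma IsOneSided.apply_ne {x y t : ℝ} (h : IsOneSided c (f '' S))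
    (hf : StrictMonoOn f S ∨ StrictAntiOn f S) (hx : x ∈ S) (hy : y ∈ S) (ht : t ∈ S)
    (hxy : x < y) (hyt : y < t) : f y ≠ c := by
  rintro rfl
  have hfx := mem_image_of_mem f hx
  have hft := mem_image_of_mem f ht
  rcases hf with hf | hf <;> rcases h with h | h
  · exact (hf hy ht hyt).not_ge (h hft)
  · exact (hf hx hy hxy).not_ge (h hfx)
  · exact (hf hx hy hxy).not_ge (h hfx)
  · exact (hf hy ht hyt).not_ge (h hft)

end OneSided

lemma exists_frequently_mem_image_Ico {f : ℕ → ℝ → ℝ} {e w z r s : ℝ} (hew : e ≤ w)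
    (hf : ∀ n, ContinuousOn (f n) (Icc e w)) (hnear : ∃ᶠ n in atTop, |f n e - z| < s)
    (hsr : s < r) (hfar : ∀ n, r ≤ |f n w - z|) : ∃ y, ∃ᶠ n in atTop, y ∈ f n '' Ico e w := by
  have hcross : ∃ᶠ n in atTop, z + s ∈ f n '' Ico e w ∨ z - s ∈ f n '' Ico e w := by
    refine hnear.mono fun n hn => ?_
    rw [abs_lt] at hn
    refine (le_abs.1 (hfar n)).imp (fun h => ?_) fun h => ?_
    · exact intermediate_value_Ico hew (hf n) ⟨by linarith, by linarith⟩
    · exact intermediate_value_Ico' hew (hf n) ⟨by linarith, by linarith⟩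
  exact (frequently_or_distrib.1 hcross).elim (fun h => ⟨_, h⟩) fun h => ⟨_, h⟩

lemma exists_tendsto_iterate_of_monotoneOn {f : ℝ → ℝ} {a b v : ℝ} {P : Set ℝ}
    (hf : MonotoneOn f P) (hmaps : MapsTo f P P) (hP : P ⊆ Icc a b) (hv : v ∈ P) :
    ∃ p, Tendsto (fun m => f^[m] v) atTop (𝓝 p) := by
  have hmem : ∀ m, f^[m] v ∈ P := fun m => hmaps.iterate m hv
  rcases le_total v (f v) with hle | hle
  · have hmono : Monotone fun m => f^[m] v := by
      refine monotone_nat_of_le_succ fun m => ?_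
      induction m with
      | zero => exact hle
      | succ m ih =>
        simpa only [Function.iterate_succ_apply'] using hf (hmem m) (hmem (m + 1)) ih
    exact ⟨_, tendsto_atTop_ciSup hmono
      (bddAbove_Icc.mono (range_subset_iff.2 fun m => hP (hmem m)))⟩
  · have hanti : Antitone fun m => f^[m] v := by
      refine antitone_nat_of_succ_le fun m => ?_
      induction m with
      | zero => exact hle
      | succ m ih =>
        simpa only [Function.iterate_succ_apply'] using hf (hmem (m + 1)) (hmem m) ih
    exact ⟨_, tendsto_atTop_ciInf hanti
      (bddBelow_Icc.mono (range_subset_iff.2 fun m => hP (hmem m)))⟩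

/-- A continuous self-map `T` of `[a, b]` which is strictly increasing up to its turning point `c`
and strictly decreasing from there on. -/
structure IsUnimodalOn (T : ℝ → ℝ) (a b c : ℝ) : Prop where
  continuousOn : ContinuousOn T (Icc a b)
  mapsTo : MapsTo T (Icc a b) (Icc a b)
  strictMonoOn : StrictMonoOn T (Icc a c)
  strictAntiOn : StrictAntiOn T (Icc c b)
  turning_mem : c ∈ Icc a b

namespace IsUnimodalOn

variable {T : ℝ → ℝ} {a b c p q v w z : ℝ} {P S : Set ℝ}

lemma map_le (hT : IsUnimodalOn T a b c) (hv : v ∈ Icc a b) : T v ≤ T c := by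
  rcases le_total v c with hvc | hcv
  · exact hT.strictMonoOn.monotoneOn ⟨hv.1, hvc⟩ ⟨hT.turning_mem.1, le_rfl⟩ hvc
  · exact hT.strictAntiOn.antitoneOn ⟨le_rfl, hT.turning_mem.2⟩ ⟨hcv, hv.2⟩ hcv

lemma iterate_mem (hT : IsUnimodalOn T a b c) (n : ℕ) : T^[n] c ∈ Icc a b :=
  hT.mapsTo.iterate n hT.turning_mem

lemma strictMonoOn_or_strictAntiOn (hT : IsUnimodalOn T a b c) (hS : S ⊆ Icc a b)
    (hside : IsOneSided c S) : StrictMonoOn T S ∨ StrictAntiOn T S :=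
  hside.imp (fun h => hT.strictMonoOn.mono fun _ hv => ⟨(hS hv).1, h hv⟩)
    fun h => hT.strictAntiOn.mono fun _ hv => ⟨h hv, (hS hv).2⟩

lemma strictMonoOn_or_strictAntiOn_iterate (hT : IsUnimodalOn T a b c) (hS : S ⊆ Icc a b) {n : ℕ}
    (hside : ∀ j < n, IsOneSided c (T^[j] '' S)) :
    StrictMonoOn T^[n] S ∨ StrictAntiOn T^[n] S := by
  induction n with
  | zero => exact .inl strictMonoOn_id
  | succ n ih =>
    have hn := mapsTo_image T^[n] S
    rw [Function.iterate_succ']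
    have hlast := hT.strictMonoOn_or_strictAntiOn
      ((hT.mapsTo.iterate n).mono_left hS).image_subset (hside n n.lt_succ_self)
    rcases ih fun j hj => hside j (hj.trans n.lt_succ_self) with hmono | hanti <;>
      rcases hlast with hmono' | hanti'
    · exact .inl (hmono'.comp hmono hn)
    · exact .inr (hanti'.comp_strictMonoOn hmono hn)
    · exact .inr (hmono'.comp_strictAntiOn hanti hn)
    · exact .inl (hanti'.comp hanti hn)

lemma image_uIcc (hT : IsUnimodalOn T a b c) (hp : p ∈ Icc a b) (hq : q ∈ Icc a b)
    (hside : IsOneSided c (uIcc p q)) : T '' uIcc p q = uIcc (T p) (T q) := by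
  have hsub : uIcc p q ⊆ Icc a b := uIcc_subset_Icc hp hq
  have hcont := hT.continuousOn.mono hsub
  rcases hT.strictMonoOn_or_strictAntiOn hsub hside with hmono | hanti
  · exact hcont.image_uIcc_of_monotoneOn hmono.monotoneOn
  · exact hcont.image_uIcc_of_antitoneOn hanti.antitoneOn

lemma bijOn_uIcc (hT : IsUnimodalOn T a b c) (hp : p ∈ Icc a b) (hq : q ∈ Icc a b)
    (hside : IsOneSided c (uIcc p q)) : BijOn T (uIcc p q) (uIcc (T p) (T q)) :=
  hT.image_uIcc hp hq hside ▸ InjOn.bijOn_image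
    ((hT.strictMonoOn_or_strictAntiOn (uIcc_subset_Icc hp hq) hside).elim
      StrictMonoOn.injOn StrictAntiOn.injOn)

lemma asymptoticallyPeriodic_of_mapsTo_iterate (hT : IsUnimodalOn T a b c) {i k : ℕ}
    (hP : P ⊆ Icc a b) (hside : ∀ j, IsOneSided c (T^[j] '' P)) (hk : 0 < k)
    (hmaps : MapsTo T^[k] P P) (hi : T^[i] c ∈ P) : AsymptoticallyPeriodic T c := by
  have hmono : MonotoneOn (T^[k] ∘ T^[k]) P := by
    rcases hT.strictMonoOn_or_strictAntiOn_iterate hP (n := k) fun j _ => hside j with h | h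
    · exact (h.comp h hmaps).monotoneOn
    · exact (h.comp h hmaps).monotoneOn
  obtain ⟨p, hp⟩ := exists_tendsto_iterate_of_monotoneOn hmono (hmaps.comp hmaps) hP hi
  refine ⟨k + k, by omega, i, p, hp.congr fun m => ?_⟩
  rw [← Function.iterate_add, ← Function.iterate_mul, Function.iterate_add_apply T _ i]

lemma asymptoticallyPeriodic_of_mapsTo (hT : IsUnimodalOn T a b c) {i : ℕ} (hP : P ⊆ Icc a b)
    (hside : IsOneSided c P) (hmaps : MapsTo T P P) (hi : T^[i] c ∈ P) :
    AsymptoticallyPeriodic T c :=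
  hT.asymptoticallyPeriodic_of_mapsTo_iterate hP
    (fun j => hside.mono (hmaps.iterate j).image_subset) Nat.one_pos hmaps hi

lemma turning_lt_map (hT : IsUnimodalOn T a b c) (haper : ¬ AsymptoticallyPeriodic T c) :
    c < T c := by
  by_contra! hle
  refine haper (hT.asymptoticallyPeriodic_of_mapsTo (i := 0) (P := Icc a c)
    (Icc_subset_Icc_right hT.turning_mem.2) (.inl fun _ hv => hv.2) (fun v hv => ?_)
    ⟨hT.turning_mem.1, le_rfl⟩)
  have hvb : v ∈ Icc a b := ⟨hv.1, hv.2.trans hT.turning_mem.2⟩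
  exact ⟨(hT.mapsTo hvb).1, (hT.map_le hvb).trans hle⟩

lemma map_map_lt_turning (hT : IsUnimodalOn T a b c) (haper : ¬ AsymptoticallyPeriodic T c) :
    T (T c) < c := by
  by_contra! hle
  have hTc := hT.mapsTo hT.turning_mem
  refine haper (hT.asymptoticallyPeriodic_of_mapsTo (i := 0) (P := Icc c (T c))
    (Icc_subset_Icc hT.turning_mem.1 hTc.2) (.inr fun _ hv => hv.1) (fun v hv => ?_)
    ⟨le_rfl, (hT.turning_lt_map haper).le⟩)
  refine ⟨hle.trans ?_, hT.map_le ⟨hT.turning_mem.1.trans hv.1, hv.2.trans hTc.2⟩⟩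
  exact hT.strictAntiOn.antitoneOn ⟨hv.1, hv.2.trans hTc.2⟩
    ⟨(hT.turning_lt_map haper).le, hTc.2⟩ hv.2

lemma map_map_le_map_map_map (hT : IsUnimodalOn T a b c)
    (haper : ¬ AsymptoticallyPeriodic T c) : T (T c) ≤ T (T (T c)) := by
  by_contra! hlt
  have hTTc := hT.mapsTo (hT.mapsTo hT.turning_mem)
  have hTTc_le := (hT.map_map_lt_turning haper).le
  refine haper (hT.asymptoticallyPeriodic_of_mapsTo (i := 2) (P := Icc a (T (T c)))
    (Icc_subset_Icc_right hTTc.2) (.inl fun _ hv => hv.2.trans hTTc_le) (fun v hv => ?_)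
    ⟨hTTc.1, le_rfl⟩)
  refine ⟨(hT.mapsTo ⟨hv.1, hv.2.trans hTTc.2⟩).1, le_trans ?_ hlt.le⟩
  exact hT.strictMonoOn.monotoneOn ⟨hv.1, hv.2.trans hTTc_le⟩ ⟨hTTc.1, hTTc_le⟩ hv.2

/-- The core `[T² c, T c]` of a unimodal map with turning point `c`. Unless `c` is asymptotically
periodic, it is invariant and contains `ω(c)`, and lifts are constructed inside it. -/
def core (T : ℝ → ℝ) (c : ℝ) : Set ℝ :=
  Icc (T (T c)) (T c)

lemma core_subset (hT : IsUnimodalOn T a b c) : core T c ⊆ Icc a b :=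
  Icc_subset_Icc (hT.iterate_mem 2).1 (hT.iterate_mem 1).2

lemma mapsTo_core (hT : IsUnimodalOn T a b c) (haper : ¬ AsymptoticallyPeriodic T c) :
    MapsTo T (core T c) (core T c) := by
  intro v hv
  have hvab := hT.core_subset hv
  refine ⟨?_, hT.map_le hvab⟩
  rcases le_total v c with hvc | hcv
  · exact (hT.map_map_le_map_map_map haper).trans <| hT.strictMonoOn.monotoneOn
      ⟨(hT.iterate_mem 2).1, (hT.map_map_lt_turning haper).le⟩ ⟨hvab.1, hvc⟩ hv.1
  · exact hT.strictAntiOn.antitoneOn ⟨hcv, hvab.2⟩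
      ⟨(hT.turning_lt_map haper).le, (hT.iterate_mem 1).2⟩ hv.2

lemma omegaSet_subset_core (hT : IsUnimodalOn T a b c) (haper : ¬ AsymptoticallyPeriodic T c) :
    omegaSet T c ⊆ core T c := by
  rw [← omegaSet_iterate 1]
  exact omegaSet_subset isClosed_Icc (hT.mapsTo_core haper)
    ⟨hT.map_le (hT.iterate_mem 1), le_rfl⟩

lemma notMem_image_Ico (hT : IsUnimodalOn T a b c) (haper : ¬ AsymptoticallyPeriodic T c) {s : ℕ}
    (hs : 0 < s) (hw : w ∈ Icc a b) (hside : ∀ j, IsOneSided c (T^[j] '' Ico (T^[s] c) w)) (j : ℕ) :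
    c ∉ T^[j] '' Ico (T^[s] c) w := by
  rintro ⟨y, ⟨hey, hyw⟩, hyc⟩
  have hsub : Ico (T^[s] c) w ⊆ Icc a b :=
    Ico_subset_Icc_self.trans (Icc_subset_Icc (hT.iterate_mem s).1 hw.2)
  rcases hey.eq_or_lt with rfl | hey
  · rw [← Function.iterate_add_apply] at hyc
    exact haper (.of_iterate_eq (m := 0) (by omega) hyc.symm)
  obtain ⟨y', hyy', hy'w⟩ := exists_between hyw
  exact (hside j).apply_ne (hT.strictMonoOn_or_strictAntiOn_iterate hsub fun i _ => hside i)
    ⟨le_rfl, hey.trans hyw⟩ ⟨hey.le, hyw⟩ ⟨(hey.trans hyy').le, hy'w⟩ hey hyy' hyc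

lemma asymptoticallyPeriodic_of_returning_image (hT : IsUnimodalOn T a b c) {s i k : ℕ}
    (hS : S ⊆ Icc a b) (hpre : IsPreconnected S) (hc : ∀ j, c ∉ T^[j] '' S) (hs : T^[s] c ∈ S)
    (hk : 0 < k) (hmeet : (T^[i] '' S ∩ T^[i + k] '' S).Nonempty) :
    AsymptoticallyPeriodic T c := by
  have hiter : ∀ n, ContinuousOn T^[n] S := fun n =>
    (hT.continuousOn.iterate hT.mapsTo n).mono hS
  set P := ⋃ m, T^[k * m + i] '' S
  have hPab : P ⊆ Icc a b :=
    iUnion_subset fun m => ((hT.mapsTo.iterate _).mono_left hS).image_subset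
  have himage : ∀ j, T^[j] '' P = ⋃ m, T^[j + (k * m + i)] '' S := fun j => by
    simp only [P, image_iUnion, ← image_comp, ← Function.iterate_add]
  have hPpre : IsPreconnected P := by
    refine .iUnion_of_chain (fun m => hpre.image _ (hiter _)) fun m => ?_
    have hlink : T^[k * m] '' (T^[i] '' S ∩ T^[i + k] '' S) ⊆
        T^[k * m + i] '' S ∩ T^[k * (m + 1) + i] '' S := by
      refine (image_inter_subset ..).trans_eq ?_
      rw [← image_comp, ← image_comp, ← Function.iterate_add, ← Function.iterate_add, mul_add_one,
        add_right_comm, add_assoc (k * m) i]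
    exact (hmeet.image _).mono hlink
  have hside : ∀ j, IsOneSided c (T^[j] '' P) := fun j => by
    refine isOneSided_of_notMem (hPpre.image _
      ((hT.continuousOn.iterate hT.mapsTo j).mono hPab)) ?_
    rw [himage, mem_iUnion]
    exact fun ⟨m, hm⟩ => hc _ hm
  refine hT.asymptoticallyPeriodic_of_mapsTo_iterate (i := i + s) hPab hside hk ?_
    (mem_iUnion.2 ⟨0, _, hs, by rw [mul_zero, zero_add, Function.iterate_add_apply]⟩)
  rw [mapsTo_iff_image_subset, himage]
  refine iUnion_subset fun m => ?_
  rw [← add_assoc, add_comm k, ← mul_add_one]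
  exact subset_iUnion (fun m => T^[k * m + i] '' S) (m + 1)

lemma asymptoticallyPeriodic_of_isOneSided_image_Ico (hT : IsUnimodalOn T a b c) {r : ℝ} {s : ℕ}
    (hs : 0 < s) (hew : T^[s] c ≤ w) (hwb : w ≤ b)
    (hside : ∀ j, IsOneSided c (T^[j] '' Ico (T^[s] c) w)) (hz : z ∈ omegaSet T c) (hr : 0 < r)
    (hfar : ∀ n, r ≤ |T^[n] w - z|) : AsymptoticallyPeriodic T c := by
  by_contra haper
  have hsub : Icc (T^[s] c) w ⊆ Icc a b := Icc_subset_Icc (hT.iterate_mem s).1 hwb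
  have hnear : ∃ᶠ n in atTop, |T^[n] (T^[s] c) - z| < r / 2 := by
    rw [← omegaSet_iterate s, mem_omegaSet_iff_mapClusterPt] at hz
    exact hz.frequently (Metric.ball_mem_nhds z (half_pos hr))
  obtain ⟨y, hy⟩ := exists_frequently_mem_image_Ico (f := (T^[·])) hew
    (fun n => (hT.continuousOn.iterate hT.mapsTo n).mono hsub) hnear (half_lt_self hr) hfar
  obtain ⟨i, hyi⟩ := hy.exists
  obtain ⟨i', hii', hyi'⟩ := frequently_atTop.1 hy (i + 1)
  obtain ⟨k, rfl⟩ := Nat.exists_eq_add_of_lt hii'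
  have hlt : T^[s] c < w := nonempty_Ico.1 (image_nonempty.1 ⟨y, hyi⟩)
  exact haper (hT.asymptoticallyPeriodic_of_returning_image (Ico_subset_Icc_self.trans hsub)
    isPreconnected_Ico (hT.notMem_image_Ico haper hs ⟨(hT.iterate_mem s).1.trans hew, hwb⟩ hside)
    ⟨le_rfl, hlt⟩ k.succ_pos ⟨y, hyi, hyi'⟩)

lemma eventually_not_isOneSided_image_Icc (hT : IsUnimodalOn T a b c)
    (haper : ¬ AsymptoticallyPeriodic T c) {x : InvLim T (Icc a b)} (hz : z ∈ omegaSet T c)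
    (hzx : ¬ MapClusterPt z atTop x.1) {s : ℕ} (hs : 0 < s) :
    ∀ᶠ n in atTop, T^[s] c ≤ x.1 n →
      ¬ ∀ j < n, IsOneSided c (T^[j] '' Icc (T^[s] c) (x.1 n)) := by
  set e := T^[s] c
  by_contra hbad
  simp only [not_eventually, Classical.not_imp, not_not] at hbad
  set l := atTop ⊓ 𝓟 {n | e ≤ x.1 n ∧ ∀ j < n, IsOneSided c (T^[j] '' Icc e (x.1 n))}
  have hl : l.NeBot := frequently_mem_iff_neBot.1 hbad
  have hl_bad : ∀ᶠ n in l, e ≤ x.1 n ∧ ∀ j < n, IsOneSided c (T^[j] '' Icc e (x.1 n)) :=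
    mem_inf_of_right (mem_principal_self _)
  obtain ⟨w, hwe, hw⟩ := (isCompact_Icc (a := e) (b := b)).exists_mapClusterPt (f := l) (u := x.1)
    (tendsto_principal.2 (hl_bad.mono fun n hn => ⟨hn.1, (x.2.1 n).2⟩))
  have hside : ∀ j, IsOneSided c (T^[j] '' Ico e w) := fun j => isOneSided_image_Ico fun v hv => by
    obtain ⟨n, hvn, hn, hjn⟩ := ((hw.frequently (Ioi_mem_nhds hv.2)).and_eventually
      (hl_bad.and ((eventually_gt_atTop j).filter_mono inf_le_left))).exists
    exact (hn.2 j hjn).mono (image_mono (Icc_subset_Icc_right hvn.le))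
  obtain ⟨r, hr, hball⟩ := exists_pos_le_dist_of_not_mapClusterPt hzx
  exact haper (hT.asymptoticallyPeriodic_of_isOneSided_image_Ico hs hwe.1 hwe.2 hside hz hr
    fun n => hball _
      (InvLim.mapClusterPt_iterate_apply hT.continuousOn isClosed_Icc (hw.mono inf_le_left) n))

/-! ### Lifting arcs -/

-- The left branch maps `[T² c, c]` onto `[T³ c, T c]`, so values below `T³ c` have no preimage on
-- the side of a point `p < c`.
lemma exists_mem_core_lift (hT : IsUnimodalOn T a b c) (haper : ¬ AsymptoticallyPeriodic T c)
    (hp : p ∈ core T c) (hv : v ∈ core T c) (hreach : T p < T^[3] c ∨ T^[3] c ≤ v) :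
    ∃ v' ∈ core T c, IsOneSided c (uIcc p v') ∧ T v' = v := by
  have hcont : ContinuousOn T (core T c) := hT.continuousOn.mono hT.core_subset
  have hlow := (hT.map_map_lt_turning haper).le
  have hhigh := (hT.turning_lt_map haper).le
  rcases le_total c p with hcp | hpc
  · obtain ⟨v', hv', rfl⟩ := intermediate_value_Icc' hhigh
      (hcont.mono (Icc_subset_Icc_left hlow)) hv
    exact ⟨v', ⟨hlow.trans hv'.1, hv'.2⟩, .inr fun t ht => (le_inf hcp hv'.1).trans ht.1, rfl⟩
  · have hp_left : T^[3] c ≤ T p := hT.strictMonoOn.monotoneOn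
      ⟨(hT.iterate_mem 2).1, hlow⟩ ⟨(hT.core_subset hp).1, hpc⟩ hp.1
    obtain ⟨v', hv', rfl⟩ := intermediate_value_Icc hlow
      (hcont.mono (Icc_subset_Icc_right hhigh)) ⟨hreach.resolve_left hp_left.not_gt, hv.2⟩
    exact ⟨v', ⟨hv'.1, hv'.2.trans hhigh⟩, .inl fun t ht => ht.2.trans (sup_le hpc hv'.2), rfl⟩

lemma exists_lift (hT : IsUnimodalOn T a b c) (haper : ¬ AsymptoticallyPeriodic T c)
    {x : InvLim T (Icc a b)} (hx : ∀ n, x.1 n ∈ core T c) {t : ℝ} (ht : t ∈ core T c)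
    (hclose : ∀ n, T^[3] c ≤ x.1 n → (∀ j < n, IsOneSided c (T^[j] '' Icc (T^[3] c) (x.1 n))) →
      |t - x.1 0| < |T^[n] (T^[3] c) - x.1 0|) :
    ∃ u : InvLim T (Icc a b), u.1 0 = t ∧ ∀ n, IsOneSided c (uIcc (x.1 (n + 1)) (u.1 (n + 1))) := by
  let S : ℕ → Set ℝ := fun n =>
    {v | v ∈ core T c ∧ T^[n] v = t ∧ ∀ j < n, IsOneSided c (T^[j] '' uIcc (x.1 n) v)}
  have hreach : ∀ n, ∀ v ∈ S n, x.1 n < T^[3] c ∨ T^[3] c ≤ v := by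
    rintro n v ⟨hv, hvt, hside⟩
    by_contra! hcon
    have hsub : uIcc (x.1 n) v ⊆ Icc a b := uIcc_subset_Icc (x.2.1 n) (hT.core_subset hv)
    have hmem : T^[3] c ∈ uIcc (x.1 n) v := mem_uIcc.2 (.inr ⟨hcon.2.le, hcon.1⟩)
    have himage : T^[n] (T^[3] c) ∈ uIcc (x.1 0) t := by
      rw [← x.iterate_apply_self n, ← hvt]
      rcases hT.strictMonoOn_or_strictAntiOn_iterate hsub hside with hmono | hanti
      · exact hmono.monotoneOn.image_uIcc_subset (mem_image_of_mem _ hmem)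
      · exact hanti.antitoneOn.image_uIcc_subset (mem_image_of_mem _ hmem)
    refine (hclose n hcon.1 fun j hj => (hside j hj).mono (image_mono ?_)).not_ge
      (abs_sub_left_of_mem_uIcc himage)
    exact (Icc_subset_Icc_left hcon.2.le).trans Icc_subset_uIcc'
  have hstep : ∀ n, SurjOn T (S (n + 1)) (S n) := by
    intro n v hvS
    obtain ⟨v', hv', hside', rfl⟩ := hT.exists_mem_core_lift haper (hx (n + 1)) hvS.1
      (x.2.2 n ▸ hreach n v hvS)
    refine ⟨v', ⟨hv', hvS.2.1, fun j hj => ?_⟩, rfl⟩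
    cases j with
    | zero => rwa [Function.iterate_zero, image_id]
    | succ j =>
      rw [Function.iterate_succ, image_comp,
        hT.image_uIcc (x.2.1 (n + 1)) (hT.core_subset hv') hside', x.2.2]
      exact hvS.2.2 j (by omega)
  obtain ⟨u, hu0, huS, huT⟩ := exists_backward_orbit hstep (t := t) ⟨ht, rfl, by simp⟩
  refine ⟨⟨u, fun n => hT.core_subset (huS n).1, huT⟩, hu0, fun n => ?_⟩
  simpa only [Function.iterate_zero, image_id] using (huS (n + 1)).2.2 0 n.succ_pos

lemma isCompact_isConnected_arc (hT : IsUnimodalOn T a b c) {x u : InvLim T (Icc a b)}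
    (hside : ∀ n, IsOneSided c (uIcc (x.1 (n + 1)) (u.1 (n + 1)))) :
    IsCompact {y : InvLim T (Icc a b) | ∀ n, y.1 n ∈ uIcc (x.1 n) (u.1 n)} ∧
      IsConnected {y : InvLim T (Icc a b) | ∀ n, y.1 n ∈ uIcc (x.1 n) (u.1 n)} := by
  refine ⟨InvLim.isCompact_setOf_forall_mem hT.continuousOn isCompact_Icc fun _ => isClosed_Icc,
    ⟨x, fun _ => left_mem_uIcc⟩, InvLim.isPreconnected_setOf_forall_mem hT.continuousOn
      isCompact_Icc (fun _ => isClosed_Icc) (fun n => uIcc_subset_Icc (x.2.1 n) (u.2.1 n))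
      (fun n => ?_) isPreconnected_uIcc⟩
  simpa only [x.2.2, u.2.2] using hT.bijOn_uIcc (x.2.1 (n + 1)) (u.2.1 (n + 1)) (hside n)

lemma not_isEndpointPt_of_lifts (hT : IsUnimodalOn T a b c) {x u v : InvLim T (Icc a b)}
    (hu : ∀ n, IsOneSided c (uIcc (x.1 (n + 1)) (u.1 (n + 1))))
    (hv : ∀ n, IsOneSided c (uIcc (x.1 (n + 1)) (v.1 (n + 1))))
    (hux : u.1 0 < x.1 0) (hxv : x.1 0 < v.1 0) : ¬ IsEndpointPt x := by
  intro hx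
  obtain ⟨hA, hA'⟩ := hT.isCompact_isConnected_arc hu
  obtain ⟨hB, hB'⟩ := hT.isCompact_isConnected_arc hv
  rcases hx _ _ hA hA' hB hB' (fun _ => left_mem_uIcc) (fun _ => left_mem_uIcc) with h | h
  · have hmem := h (a := u) (fun _ => right_mem_uIcc) 0
    rw [uIcc_of_le hxv.le] at hmem
    exact hmem.1.not_gt hux
  · have hmem := h (a := v) (fun _ => right_mem_uIcc) 0
    rw [uIcc_of_ge hux.le] at hmem
    exact hmem.2.not_gt hxv

lemma not_isEndpointPt_of_forall_ne_iterate (hT : IsUnimodalOn T a b c)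
    (haper : ¬ AsymptoticallyPeriodic T c) {x : InvLim T (Icc a b)}
    (hx : x ∈ foldingPoints T (Icc a b) c) (hz : z ∈ omegaSet T c)
    (hzx : ¬ MapClusterPt z atTop x.1) (hne : ∀ n, x.1 0 ≠ T^[n] c) : ¬ IsEndpointPt x := by
  have hcore : ∀ n, x.1 n ∈ core T c := fun n => hT.omegaSet_subset_core haper (hx n)
  have hcore_nhds : core T c ∈ 𝓝 (x.1 0) :=
    Icc_mem_nhds ((hcore 0).1.lt_of_ne (hne 2).symm) ((hcore 0).2.lt_of_ne (hne 1))
  obtain ⟨N, hN⟩ := eventually_atTop.1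
    (hT.eventually_not_isOneSided_image_Icc haper hz hzx (s := 3) (by norm_num))
  have hclose : ∀ᶠ t in 𝓝 (x.1 0), ∀ n ∈ Iio N, |t - x.1 0| < |T^[n] (T^[3] c) - x.1 0| := by
    refine (eventually_all_finite (finite_Iio N)).2 fun n _ => ?_
    refine ContinuousAt.eventually_lt (by fun_prop) continuousAt_const ?_
    rw [sub_self, abs_zero, abs_pos, sub_ne_zero, ← Function.iterate_add_apply]
    exact (hne _).symm
  have hlift : ∀ᶠ t in 𝓝 (x.1 0), ∃ u : InvLim T (Icc a b), u.1 0 = t ∧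
      ∀ n, IsOneSided c (uIcc (x.1 (n + 1)) (u.1 (n + 1))) := by
    filter_upwards [hcore_nhds, hclose] with t htcore ht
    exact hT.exists_lift haper hcore htcore fun n hle hside =>
      ht n (not_le.1 fun hNn => hN n hNn hle hside)
  obtain ⟨_, ⟨u, rfl, hu⟩, hux⟩ :=
    ((hlift.filter_mono nhdsWithin_le_nhds).and (self_mem_nhdsWithin (s := Iio (x.1 0)))).exists
  obtain ⟨_, ⟨v, rfl, hv⟩, hxv⟩ :=
    ((hlift.filter_mono nhdsWithin_le_nhds).and (self_mem_nhdsWithin (s := Ioi (x.1 0)))).exists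
  exact hT.not_isEndpointPt_of_lifts hu hv hux hxv

theorem mapClusterPt_of_isEndpointPt (hT : IsUnimodalOn T a b c) {x : InvLim T (Icc a b)}
    (hx : x ∈ foldingPoints T (Icc a b) c) (hend : IsEndpointPt x) (hz : z ∈ omegaSet T c) :
    MapClusterPt z atTop x.1 := by
  by_cases haper : AsymptoticallyPeriodic T c
  · exact haper.mapClusterPt hT.continuousOn isClosed_Icc hT.mapsTo hT.turning_mem hx hz
  by_contra hzx
  obtain ⟨N, hN⟩ : ∃ N, ∀ n, x.1 N ≠ T^[n] c := by
    by_contra! horbit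
    obtain ⟨m, hm⟩ := horbit 0
    obtain ⟨k, hk⟩ := horbit (m + 1)
    have heq : T^[m + 1 + k] c = T^[m] c := by
      rw [Function.iterate_add_apply, ← hk, x.iterate_apply_self, hm]
    have := injective_iterate_of_not_asymptoticallyPeriodic haper heq
    omega
  set y := (InvLim.shift hT.continuousOn hT.mapsTo).symm^[N] x
  have hy : ∀ n, y.1 n = x.1 (n + N) := InvLim.shift_symm_iterate_apply _ _ x N
  refine hT.not_isEndpointPt_of_forall_ne_iterate haper (x := y) (fun n => hy n ▸ hx (n + N)) hz
    (fun hzy => hzx ?_) (fun n => ?_) ((InvLim.isEndpointPt_shift_symm_iterate_iff _ _ N).2 hend)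
  · exact .of_comp (tendsto_add_atTop_nat N) (hzy.congrFun (Eventually.of_forall hy))
  · rw [hy, zero_add]
    exact hN n

end IsUnimodalOn

theorem stmt13_general {T : ℝ → ℝ} {a b c : ℝ} (hT : IsUnimodalOn T a b c)
    (hne : (foldingPoints T (Icc a b) c \ {x | IsEndpointPt x}).Nonempty) :
    foldingPoints T (Icc a b) c ⊆
      closure (foldingPoints T (Icc a b) c \ {x | IsEndpointPt x}) := by
  set D := foldingPoints T (Icc a b) c \ {x | IsEndpointPt x}
  set σ := InvLim.shift hT.continuousOn hT.mapsTo
  have hD : MapsTo σ D D := fun x hx =>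
    ⟨InvLim.mapsTo_shift_foldingPoints _ _ isClosed_Icc hT.turning_mem hx.1,
      fun hend => hx.2 ((isEndpointPt_homeomorph_apply_iff σ).1 hend)⟩
  refine fun x hx => InvLim.mem_closure_of_mapsTo_shift hD fun n => ?_
  by_cases hminimal : ∀ v ∈ omegaSet T c, omegaSet T c ⊆ omegaSet T v
  · obtain ⟨y, hy⟩ := hne
    have horbit := mem_omegaSet_iff_mapClusterPt.1 (hminimal _ (hy.1 0) (hx n))
    exact isClosed_closure.mem_of_mapClusterPt horbit (Eventually.of_forall fun k =>
      subset_closure ⟨σ^[k] y, hD.iterate k hy, InvLim.shift_iterate_apply _ _ y k 0⟩)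
  · push Not at hminimal
    obtain ⟨v, hv, hsub⟩ := hminimal
    obtain ⟨z, hz, hzv⟩ := not_subset.1 hsub
    refine mem_closure_iff_nhds.2 fun U hU => ?_
    obtain ⟨y, hyF, hyU, z', hz', hcluster⟩ := InvLim.exists_foldingPoint_mem_not_mapClusterPt
      hT.continuousOn isCompact_Icc hT.mapsTo hT.turning_mem hv hz hzv (hx n) hU
    exact ⟨_, hyU, y,
      ⟨hyF, fun hend => hcluster (hT.mapClusterPt_of_isEndpointPt hyF hend hz')⟩, rfl⟩

/-- If the set `F \ E` of non-end folding points of a unimodal inverse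
limit `X` is nonempty, then it is dense in the set `F` of all folding points. -/
theorem stmt13 (T : ℝ → ℝ) (c : ℝ) (hc : c = 1/2) (hT : IsUnimodal T)
    (hinf : Function.Injective fun n : ℕ => T^[n] c)
    (E F : Set (InvLim T (Set.Icc 0 1)))
    (hE : E = {x : InvLim T (Set.Icc 0 1) | IsEndpointPt x})
    (hF : F = {x : InvLim T (Set.Icc 0 1) | ∀ n, x.1 n ∈ omegaSet T c})
    (hne : (F \ E).Nonempty) :
    F ⊆ closure (F \ E) := by
  subst hc hE hF
  exact stmt13_general ⟨hT.1, hT.2.1, hT.2.2.1, hT.2.2.2, by norm_num, by norm_num⟩ hne
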